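/- arXiv:1407.2961 — 2 statements merged into one kernel-verified Lean document; each statement's English description precedes it below -/
import Mathlib

section
/- Suppose y ≤ T(y) and no data point lies strictly between y and T(y) (i.e., there is no x_i with y < x_i < T(y)). Then T(T(y)) ≥ T(y). -/
open Finset

/-!
Write `c` for the mean shift of `y`: it balances the weighted deviations, `∑ kᵢ(y) (xᵢ - c) = 0`.
Move the kernels from `y` up to `c`. A point `xᵢ ≤ y` does not gain weight and has a nonpositive
deviation; a point `xᵢ ≥ c` does not lose weight and has a nonnegative deviation. As no point lies
in between, the weighted deviations from `c` now have a nonnegative sum, so the mean is at least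
`c`.
-/

theorem mul_sub_le_mul_sub_of_unimodal {R : Type*} [Ring R] [LinearOrder R]
    [IsOrderedRing R] {f : R → R} {p y z : R}
    (hf_mono : MonotoneOn f (Set.Iic p)) (hf_anti : AntitoneOn f (Set.Ici p))
    (hyz : y ≤ z) (hp : p ∉ Set.Ioo y z) :
    f y * (p - z) ≤ f z * (p - z) := by
  rcases le_or_gt p y with hpy | hyp
  · exact mul_le_mul_of_nonpos_right (hf_anti hpy (hpy.trans hyz) hyz)
      (sub_nonpos.2 (hpy.trans hyz))
  · have hzp : z ≤ p := not_lt.1 fun hpz ↦ hp ⟨hyp, hpz⟩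
    exact mul_le_mul_of_nonneg_right (hf_mono (hyz.trans hzp) hzp hyz) (sub_nonneg.2 hzp)

section

variable {ι 𝕜 : Type*} [Field 𝕜]

theorem sum_mul_sub_eq_sum_mul_centerMass_sub {s : Finset ι} {w : ι → 𝕜}
    (hw : ∑ i ∈ s, w i ≠ 0) (x : ι → 𝕜) (a : 𝕜) :
    ∑ i ∈ s, w i * (x i - a) = (∑ i ∈ s, w i) * (s.centerMass w x - a) := by
  simp only [centerMass, smul_eq_mul, mul_sub, sum_sub_distrib, sum_mul, mul_inv_cancel_left₀ hw]

/-- The mean shift map: the mean of the points `x i`, `i ∈ s`, weighted by the values at `z` of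
their kernels `k i`. Each point carries its own kernel, already centred at that point, so that
sample weights and variable bandwidths are covered. The value is `0` where the weights sum to
`0`. -/
def meanShift (s : Finset ι) (k : ι → 𝕜 → 𝕜) (x : ι → 𝕜) (z : 𝕜) : 𝕜 :=
  s.centerMass (k · z) x

theorem meanShift_eq_div (s : Finset ι) (k : ι → 𝕜 → 𝕜) (x : ι → 𝕜) (z : 𝕜) :
    meanShift s k x z = (∑ i ∈ s, x i * k i z) / ∑ i ∈ s, k i z := by
  simp only [meanShift, centerMass, smul_eq_mul, div_eq_inv_mul, mul_comm (x _)]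

variable [LinearOrder 𝕜] [IsStrictOrderedRing 𝕜]

theorem le_centerMass_iff_sum_nonneg {s : Finset ι} {w : ι → 𝕜} (hw : 0 < ∑ i ∈ s, w i)
    {x : ι → 𝕜} {a : 𝕜} :
    a ≤ s.centerMass w x ↔ 0 ≤ ∑ i ∈ s, w i * (x i - a) := by
  rw [sum_mul_sub_eq_sum_mul_centerMass_sub hw.ne', mul_nonneg_iff_of_pos_left hw, sub_nonneg]

theorem exists_pos_weight_centerMass_le {s : Finset ι} {w : ι → 𝕜} (hw₀ : ∀ i ∈ s, 0 ≤ w i)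
    (hw : 0 < ∑ i ∈ s, w i) (x : ι → 𝕜) :
    ∃ i ∈ s, 0 < w i ∧ s.centerMass w x ≤ x i := by
  by_contra! hlt
  have hbalance : 0 ≤ ∑ i ∈ s, w i * (x i - s.centerMass w x) :=
    (le_centerMass_iff_sum_nonneg hw).1 le_rfl
  obtain ⟨j, hj, hwj⟩ : ∃ j ∈ s, 0 < w j := (sum_pos_iff_of_nonneg hw₀).1 hw
  refine hbalance.not_gt (sum_neg' (fun i hi ↦ ?_)
    ⟨j, hj, mul_neg_of_pos_of_neg hwj (sub_neg.2 (hlt j hj hwj))⟩)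
  rcases (hw₀ i hi).eq_or_lt with hwi | hwi
  · simp [← hwi]
  · exact (mul_neg_of_pos_of_neg hwi (sub_neg.2 (hlt i hi hwi))).le

theorem antitoneOn_comp_sub_div_sq {β : Type*} [Preorder β] {g : 𝕜 → β}
    (hg : AntitoneOn g (Set.Ici 0)) (p h : 𝕜) :
    AntitoneOn (fun z ↦ g (((z - p) / h) ^ 2)) (Set.Ici p) := by
  intro y hy z _ hyz
  refine hg (sq_nonneg _) (sq_nonneg _) ?_
  rw [div_pow, div_pow]
  have : 0 ≤ y - p := sub_nonneg.2 hy
  gcongr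

theorem monotoneOn_comp_sub_div_sq {β : Type*} [Preorder β] {g : 𝕜 → β}
    (hg : AntitoneOn g (Set.Ici 0)) (p h : 𝕜) :
    MonotoneOn (fun z ↦ g (((z - p) / h) ^ 2)) (Set.Iic p) := by
  intro y _ z hz hyz
  refine hg (sq_nonneg _) (sq_nonneg _) ?_
  rw [div_pow, div_pow, sub_sq_comm z, sub_sq_comm y]
  have : 0 ≤ p - z := sub_nonneg.2 hz
  gcongr

theorem mean_shift_step_monotone_up_general {s : Finset ι} {k : ι → 𝕜 → 𝕜} {x : ι → 𝕜}
    (hk_nonneg : ∀ i ∈ s, ∀ z, 0 ≤ k i z)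
    (hk_mono : ∀ i ∈ s, MonotoneOn (k i) (Set.Iic (x i)))
    (hk_anti : ∀ i ∈ s, AntitoneOn (k i) (Set.Ici (x i)))
    {y : 𝕜} (hky : 0 < ∑ i ∈ s, k i y) (hy : y ≤ meanShift s k x y)
    (hno : ∀ i ∈ s, x i ∉ Set.Ioo y (meanShift s k x y)) :
    meanShift s k x y ≤ meanShift s k x (meanShift s k x y) := by
  set c := meanShift s k x y with hc
  have hkc : 0 < ∑ i ∈ s, k i c := by
    obtain ⟨j, hj, hkj, hcj⟩ :=
      exists_pos_weight_centerMass_le (fun i hi ↦ hk_nonneg i hi y) hky x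
    exact sum_pos' (fun i hi ↦ hk_nonneg i hi c)
      ⟨j, hj, hkj.trans_le (hk_mono j hj (hy.trans hcj) hcj hy)⟩
  refine (le_centerMass_iff_sum_nonneg hkc).2 ?_
  calc
    0 ≤ ∑ i ∈ s, k i y * (x i - c) := (le_centerMass_iff_sum_nonneg hky).1 hc.le
    _ ≤ ∑ i ∈ s, k i c * (x i - c) := sum_le_sum fun i hi ↦
      mul_sub_le_mul_sub_of_unimodal (hk_mono i hi) (hk_anti i hi) hy (hno i hi)

end

theorem mean_shift_step_monotone_up
(n : ℕ) (hn : 0 < n) (x : Fin n → ℝ) (h : ℝ) (hh : 0 < h)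
(g : ℝ → ℝ)
    (hg_pos : ∀ t ∈ Set.Ici (0:ℝ), 0 < g t)
    (hg_anti : StrictAntiOn g (Set.Ici 0))
    (T : ℝ → ℝ)
    (hT : ∀ z, T z = (∑ i, x i * g (((z - x i) / h) ^ 2)) / (∑ i, g (((z - x i) / h) ^ 2)))
    (y : ℝ) (hy : y ≤ T y)
    (hno : ¬ ∃ i, y < x i ∧ x i < T y) :
    T y ≤ T (T y) := by
  have hk_pos (i : Fin n) (z : ℝ) : 0 < g (((z - x i) / h) ^ 2) :=
    hg_pos _ (Set.mem_Ici.2 (sq_nonneg _))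
  obtain rfl : T = meanShift univ (fun i z ↦ g (((z - x i) / h) ^ 2)) x :=
    funext fun z ↦ by rw [hT, meanShift_eq_div]
  exact mean_shift_step_monotone_up_general (fun i _ z ↦ (hk_pos i z).le)
    (fun i _ ↦ monotoneOn_comp_sub_div_sq hg_anti.antitoneOn (x i) h)
    (fun i _ ↦ antitoneOn_comp_sub_div_sq hg_anti.antitoneOn (x i) h)
    (sum_pos (fun i _ ↦ hk_pos i y) ⟨⟨0, hn⟩, mem_univ _⟩) hy (fun i _ hi ↦ hno ⟨i, hi⟩)
end

section
/- For every y ∈ ℝ, the derivative of the kernel density estimate satisfies f'(y) = (2c/(n h³)) · (T(y) − y) · Σ_{i=1}^n g(((y − x_i)/h)²). In particular, since g > 0, the sign of f'(y) equals the sign of the mean shift T(y) − y. -/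
open Finset

/- Since `k' = -g`, the chain rule turns each summand of the density into a positive multiple of
`g(‖(y - xᵢ) / h‖²) (xᵢ - y)`. A weighted sum of the displacements `xᵢ - y` is the total weight
times the displacement of the weighted mean, which is `T y - y`. -/

theorem sum_smul_sub_eq_sum_smul_centerMass_sub {R E ι : Type*} [Field R] [AddCommGroup E]
    [Module R E] {s : Finset ι} {w : ι → R} (hw : ∑ i ∈ s, w i ≠ 0) (x : ι → E) (y : E) :
    ∑ i ∈ s, w i • (x i - y) = (∑ i ∈ s, w i) • (s.centerMass w x - y) := by
  simp only [smul_sub, sum_sub_distrib, ← sum_smul, centerMass, smul_inv_smul₀ hw]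

theorem real_sign_mul_of_pos_left {a : ℝ} (ha : 0 < a) (b : ℝ) :
    Real.sign (a * b) = Real.sign b := by
  simp only [Real.sign, mul_neg_iff, mul_pos_iff_of_pos_left ha, ha, ha.not_gt, true_and, false_and,
    or_false]

section Kernel

variable {E ι : Type*} [NormedAddCommGroup E] [Fintype ι]

/-- The sum of the radial kernels with profile `k` and bandwidth `h` centred at the data points
`x i`. The kernel density estimate is a multiple of it, and with `g = -k'` in place of `k` it is
the total weight of the data in the mean shift at `y`. -/
noncomputable def kernelSum (k : ℝ → ℝ) (h : ℝ) (x : ι → E) (y : E) : ℝ :=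
  ∑ i, k ((‖y - x i‖ / h) ^ 2)

theorem kernelSum_pos [Nonempty ι] {g : ℝ → ℝ} (hg : ∀ t ∈ Set.Ici (0 : ℝ), 0 < g t) (h : ℝ)
    (x : ι → E) (y : E) : 0 < kernelSum g h x y :=
  sum_pos (fun _ _ => hg _ (Set.mem_Ici.2 (sq_nonneg _))) univ_nonempty

theorem kernelSum_real (k : ℝ → ℝ) (h : ℝ) (x : ι → ℝ) (y : ℝ) :
    kernelSum k h x y = ∑ i, k (((y - x i) / h) ^ 2) := by
  simp only [kernelSum, div_pow, Real.norm_eq_abs, sq_abs]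

/-- The mean shift map: the mean of the data points `x i`, weighted by the kernel with profile `g`
and bandwidth `h` centred at `y`. Where the total weight `kernelSum g h x y` vanishes, the value
is `0`. -/
noncomputable def meanShiftMap [NormedSpace ℝ E] (g : ℝ → ℝ) (h : ℝ) (x : ι → E) (y : E) : E :=
  univ.centerMass (fun i => g ((‖y - x i‖ / h) ^ 2)) x

theorem meanShiftMap_real (g : ℝ → ℝ) (h : ℝ) (x : ι → ℝ) (y : ℝ) :
    meanShiftMap g h x y =
      (∑ i, x i * g (((y - x i) / h) ^ 2)) / ∑ i, g (((y - x i) / h) ^ 2) := by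
  simp only [meanShiftMap, centerMass, div_pow, Real.norm_eq_abs, sq_abs, smul_eq_mul,
    inv_mul_eq_div, mul_comm]

variable [InnerProductSpace ℝ E]

theorem hasFDerivAt_norm_sub_div_sq (h : ℝ) (a y : E) :
    HasFDerivAt (fun z => (‖z - a‖ / h) ^ 2) ((2 / h ^ 2) • innerSL ℝ (y - a)) y := by
  have hsq := ((hasFDerivAt_id y).sub_const a).norm_sq.const_mul (h ^ 2)⁻¹
  convert! hsq using 1
  · ext z
    simp only [id, div_pow, inv_mul_eq_div]
  · ext v
    simp only [smul_apply, coe_innerSL_apply, smul_eq_mul, id_eq, ContinuousLinearMap.comp_id,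
      nsmul_eq_mul, Nat.cast_ofNat]
    ring

theorem hasFDerivAt_kernel {k : ℝ → ℝ} {k' h : ℝ} {a y : E}
    (hk : HasDerivWithinAt k k' (Set.Ici 0) ((‖y - a‖ / h) ^ 2)) :
    HasFDerivAt (fun z => k ((‖z - a‖ / h) ^ 2)) ((2 / h ^ 2) • (-k') • innerSL ℝ (a - y)) y := by
  have hcomp := hk.comp_hasFDerivAt y (hasFDerivAt_norm_sub_div_sq h a y)
    (.of_forall fun _ => sq_nonneg _)
  refine hcomp.congr_fderiv ?_
  rw [smul_comm, ← neg_sub y a, map_neg, neg_smul_neg]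

theorem hasFDerivAt_kernelSum {k g : ℝ → ℝ} {h : ℝ} {x : ι → E} {y : E}
    (hk : ∀ i, HasDerivWithinAt k (-g ((‖y - x i‖ / h) ^ 2)) (Set.Ici 0) ((‖y - x i‖ / h) ^ 2))
    (hg : kernelSum g h x y ≠ 0) :
    HasFDerivAt (kernelSum k h x)
      ((2 / h ^ 2 * kernelSum g h x y) • innerSL ℝ (meanShiftMap g h x y - y)) y := by
  have hsum := HasFDerivAt.fun_sum (u := univ) fun i _ => hasFDerivAt_kernel (hk i)
  refine hsum.congr_fderiv ?_
  simp only [neg_neg, ← map_smul, ← map_sum, ← smul_sum, mul_smul]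
  rw [sum_smul_sub_eq_sum_smul_centerMass_sub hg]
  rfl

theorem mean_shift_deriv_formula_general {k g : ℝ → ℝ} {C h : ℝ} (hC : 0 < C) (hh : h ≠ 0)
    {x : ι → E} {y : E}
    (hk : ∀ i, HasDerivWithinAt k (-g ((‖y - x i‖ / h) ^ 2)) (Set.Ici 0) ((‖y - x i‖ / h) ^ 2))
    (hg : 0 < kernelSum g h x y) :
    HasFDerivAt (fun z => C * kernelSum k h x z)
        ((C * (2 / h ^ 2 * kernelSum g h x y)) • innerSL ℝ (meanShiftMap g h x y - y)) y ∧
      ∀ v, Real.sign (fderiv ℝ (fun z => C * kernelSum k h x z) y v) =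
        Real.sign (inner ℝ (meanShiftMap g h x y - y) v) := by
  have hderiv := (hasFDerivAt_kernelSum hk hg.ne').const_mul C
  rw [smul_smul] at hderiv
  refine ⟨hderiv, fun v => ?_⟩
  rw [hderiv.fderiv]
  exact real_sign_mul_of_pos_left (by positivity) _

end Kernel

theorem mean_shift_deriv_formula
(n : ℕ) (hn : 0 < n) (x : Fin n → ℝ) (h : ℝ) (hh : 0 < h)
(c : ℝ) (hc : 0 < c)
    (k g : ℝ → ℝ)
    (hk_nonneg : ∀ t ∈ Set.Ici (0:ℝ), 0 ≤ k t)
    (hk_diff : Differentiable ℝ k)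
    (hg : ∀ t, g t = -(deriv k t))
    (hg_pos : ∀ t ∈ Set.Ici (0:ℝ), 0 < g t)
    (f T : ℝ → ℝ)
    (hf : ∀ z, f z = c / (n * h) * ∑ i, k (((z - x i) / h) ^ 2))
    (hT : ∀ z, T z = (∑ i, x i * g (((z - x i) / h) ^ 2)) / (∑ i, g (((z - x i) / h) ^ 2)))
    (y : ℝ) :
    deriv f y = 2 * c / (n * h ^ 3) * (T y - y) * ∑ i, g (((y - x i) / h) ^ 2) ∧
      Real.sign (deriv f y) = Real.sign (T y - y) := by
  have : NeZero n := ⟨hn.ne'⟩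
  have hf_eq : f = fun z => c / (n * h) * kernelSum k h x z :=
    funext fun z => by rw [hf, kernelSum_real]
  have hk (t : ℝ) : HasDerivWithinAt k (-g t) (Set.Ici 0) t := by
    simpa only [hg, neg_neg] using (hk_diff t).hasDerivAt.hasDerivWithinAt
  obtain ⟨hderiv, hsign⟩ := mean_shift_deriv_formula_general (C := c / (n * h)) (by positivity)
    hh.ne' (fun _ => hk _) (kernelSum_pos hg_pos h x y)
  rw [hT, ← meanShiftMap_real, ← kernelSum_real, hf_eq]
  constructor
  · rw [hderiv.hasDerivAt.deriv]
    simp only [smul_apply, coe_innerSL_apply, RCLike.inner_apply, Real.ringHom_apply, one_mul,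
      smul_eq_mul]
    field_simp
  · simpa using hsign 1
end
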